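/- Let M be a positive bounded operator and P a positive trace-class operator on a complex Hilbert space H, and let z be a positive Hilbert–Schmidt operator. Then, as h → 0 among self-adjoint Hilbert–Schmidt operators with ‖h‖_HS < 1/2, one has Tr[M (z+h)²(1+z+h)^{-1}] + Tr[P(1+z+h)^{-1}] − Tr[M z²(1+z)^{-1}] − Tr[P(1+z)^{-1}] = Tr[(M − (1+z)^{-1} M (1+z)^{-1} − (1+z)^{-1} P (1+z)^{-1}) h] + o(‖h‖_HS). In other words, the functional F(z) = Tr[M z²(1+z)^{-1}] + Tr[P(1+z)^{-1}] is Fréchet differentiable at every positive Hilbert–Schmidt z with gradient M − (1+z)^{-1} M (1+z)^{-1} − (1+z)^{-1} P (1+z)^{-1}. -/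

import Mathlib

set_option synthInstance.maxHeartbeats 1000000
set_option maxHeartbeats 1000000

open scoped InnerProductSpace

section TraceSetup

variable (H : Type*) [NormedAddCommGroup H] [InnerProductSpace ℂ H] [CompleteSpace H]

/-- A fixed Hilbert basis of `H`, used to define the trace. -/
noncomputable def traceBasis : HilbertBasis (exists_hilbertBasis ℂ H).choose ℂ H :=
  (exists_hilbertBasis ℂ H).choose_spec.choose

variable {H}

/-- The diagonal of an operator with respect to the chosen Hilbert basis. -/
noncomputable def opDiag (A : H →L[ℂ] H) (i : (exists_hilbertBasis ℂ H).choose) : ℝ :=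
  (⟪traceBasis H i, A (traceBasis H i)⟫_ℂ).re

/-- The trace of an operator: the sum of its diagonal with respect to the chosen Hilbert
basis.  For a trace-class operator this agrees with the usual trace. -/
noncomputable def opTrace (A : H →L[ℂ] H) : ℝ := ∑' i, opDiag A i

/-- An operator is a positive trace-class operator iff it is positive (for the Loewner order,
i.e. self-adjoint with nonnegative quadratic form) and its diagonal is summable. -/
def IsPosTraceClass (A : H →L[ℂ] H) : Prop := 0 ≤ A ∧ Summable (opDiag A)

/-- `A` is Hilbert–Schmidt iff `A* A` has finite trace. -/
def IsHilbertSchmidt (A : H →L[ℂ] H) : Prop := Summable (opDiag (star A * A))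

/-- The Hilbert–Schmidt norm `‖A‖_HS = (Tr[A* A])^{1/2}`. -/
noncomputable def hsNorm (A : H →L[ℂ] H) : ℝ := Real.sqrt (opTrace (star A * A))

end TraceSetup

/-!
The energy has an exact second-order expansion. Put `R = (1 + z)⁻¹`, `S = (1 + z + h)⁻¹` and
`N = M + P`. Since `z² R = z - 1 + R` and `S = R - R h S`, the operators whose traces enter the
first-order remainder add up to

  `N R h · R h S + (R · N R h - N R h · R)`.

`R` is not Hilbert–Schmidt, so cyclicity of the trace does not dispose of the commutator at once.
But `R = 1 - z R` and `1` is central, so it equals `N R h · z R - z R · N R h`, a commutator of two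
Hilbert–Schmidt operators, and its trace vanishes. By Cauchy–Schwarz the trace of the first summand
is `O(‖h‖_HS²)`.
-/

section HilbertBasis

variable {𝕜 ι κ E F : Type*} [RCLike 𝕜] [NormedAddCommGroup E] [InnerProductSpace 𝕜 E]
  [NormedAddCommGroup F] [InnerProductSpace 𝕜 F]

theorem hasSum_norm_inner_sq_hilbertBasis (b : HilbertBasis ι 𝕜 E) (x : E) :
    HasSum (fun i ↦ ‖⟪b i, x⟫_𝕜‖ ^ 2) (‖x‖ ^ 2) := by
  simpa [b.repr_apply_apply] using lp.hasSum_norm (p := 2) (by norm_num) (b.repr x)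

theorem tsum_enorm_inner_sq_hilbertBasis (b : HilbertBasis ι 𝕜 E) (x : E) :
    ∑' i, ‖⟪b i, x⟫_𝕜‖ₑ ^ 2 = ‖x‖ₑ ^ 2 := by
  have hb := hasSum_norm_inner_sq_hilbertBasis b x
  simp only [← ofReal_norm, ← ENNReal.ofReal_pow (norm_nonneg _)]
  rw [← hb.tsum_eq, ENNReal.ofReal_tsum_of_nonneg (fun i ↦ by positivity) hb.summable]

theorem tsum_enorm_adjoint_apply_sq_hilbertBasis [CompleteSpace E] [CompleteSpace F]
    (b : HilbertBasis ι 𝕜 E) (c : HilbertBasis κ 𝕜 F) (A : E →L[𝕜] F) :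
    ∑' j, ‖A.adjoint (c j)‖ₑ ^ 2 = ∑' i, ‖A (b i)‖ₑ ^ 2 := by
  calc ∑' j, ‖A.adjoint (c j)‖ₑ ^ 2
      = ∑' j, ∑' i, ‖⟪b i, A.adjoint (c j)⟫_𝕜‖ₑ ^ 2 := by
        simp only [tsum_enorm_inner_sq_hilbertBasis]
    _ = ∑' i, ∑' j, ‖⟪b i, A.adjoint (c j)⟫_𝕜‖ₑ ^ 2 := ENNReal.tsum_comm
    _ = ∑' i, ∑' j, ‖⟪c j, A (b i)⟫_𝕜‖ₑ ^ 2 := by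
        simp only [A.adjoint_inner_right, ← ofReal_norm, norm_inner_symm (A _)]
    _ = ∑' i, ‖A (b i)‖ₑ ^ 2 := by simp only [tsum_enorm_inner_sq_hilbertBasis]

end HilbertBasis

theorem norm_mul_apply_sq_le {𝕜 E : Type*} [NontriviallyNormedField 𝕜]
    [SeminormedAddCommGroup E] [NormedSpace 𝕜 E] (L A : E →L[𝕜] E) (x : E) :
    ‖(L * A) x‖ ^ 2 ≤ ‖L‖ ^ 2 * ‖A x‖ ^ 2 := by
  rw [← mul_pow]
  exact pow_le_pow_left₀ (norm_nonneg _) (L.le_opNorm _) 2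

section HilbertSchmidt

variable {H : Type*} [NormedAddCommGroup H] [InnerProductSpace ℂ H] [CompleteSpace H]
  {A B : H →L[ℂ] H}

theorem opDiag_star_mul (A B : H →L[ℂ] H) (i) :
    opDiag (star A * B) i = (⟪A (traceBasis H i), B (traceBasis H i)⟫_ℂ).re := by
  simp [opDiag, ContinuousLinearMap.star_eq_adjoint, ContinuousLinearMap.adjoint_inner_right]

theorem opDiag_star_mul_self (A : H →L[ℂ] H) (i) :
    opDiag (star A * A) i = ‖A (traceBasis H i)‖ ^ 2 := by
  rw [opDiag_star_mul]
  exact inner_self_eq_norm_sq (𝕜 := ℂ) _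

theorem opTrace_star (A : H →L[ℂ] H) : opTrace (star A) = opTrace A :=
  tsum_congr fun i ↦ by
    simpa [ContinuousLinearMap.star_eq_adjoint, A.adjoint_inner_right, opDiag] using
      inner_re_symm (𝕜 := ℂ) (A (traceBasis H i)) (traceBasis H i)

theorem isHilbertSchmidt_iff_summable :
    IsHilbertSchmidt A ↔ Summable fun i ↦ ‖A (traceBasis H i)‖ ^ 2 := by
  simp only [IsHilbertSchmidt, funext (opDiag_star_mul_self A)]

theorem isHilbertSchmidt_iff_tsum_enorm_ne_top :
    IsHilbertSchmidt A ↔ ∑' i, ‖A (traceBasis H i)‖ₑ ^ 2 ≠ ⊤ := by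
  simp only [isHilbertSchmidt_iff_summable, ← toReal_enorm, ← ENNReal.toReal_pow]
  exact ⟨fun hA ↦ by simpa [← ofReal_norm, ← ENNReal.ofReal_pow] using hA.tsum_ofReal_ne_top,
    ENNReal.summable_toReal⟩

theorem isHilbertSchmidt_iff_memℓp :
    IsHilbertSchmidt A ↔ Memℓp (fun i ↦ A (traceBasis H i)) 2 := by
  simp [isHilbertSchmidt_iff_summable, memℓp_gen_iff]

theorem hsNorm_nonneg (A : H →L[ℂ] H) : 0 ≤ hsNorm A := Real.sqrt_nonneg _

theorem hsNorm_sq (A : H →L[ℂ] H) : hsNorm A ^ 2 = ∑' i, ‖A (traceBasis H i)‖ ^ 2 := by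
  simp only [hsNorm, opTrace, opDiag_star_mul_self]
  exact Real.sq_sqrt (tsum_nonneg fun i ↦ by positivity)

theorem hsNorm_sq_eq_toReal_tsum_enorm (A : H →L[ℂ] H) :
    hsNorm A ^ 2 = (∑' i, ‖A (traceBasis H i)‖ₑ ^ 2).toReal := by
  rw [hsNorm_sq, ENNReal.tsum_toReal_eq (fun i ↦ by simp)]
  simp

theorem tsum_enorm_star_apply_traceBasis_sq (A : H →L[ℂ] H) :
    ∑' i, ‖star A (traceBasis H i)‖ₑ ^ 2 = ∑' i, ‖A (traceBasis H i)‖ₑ ^ 2 :=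
  tsum_enorm_adjoint_apply_sq_hilbertBasis (traceBasis H) (traceBasis H) A

theorem hsNorm_star (A : H →L[ℂ] H) : hsNorm (star A) = hsNorm A := by
  rw [← sq_eq_sq₀ (hsNorm_nonneg _) (hsNorm_nonneg _), hsNorm_sq_eq_toReal_tsum_enorm,
    hsNorm_sq_eq_toReal_tsum_enorm, tsum_enorm_star_apply_traceBasis_sq]

namespace IsHilbertSchmidt

protected theorem star (hA : IsHilbertSchmidt A) : IsHilbertSchmidt (star A) := by
  rw [isHilbertSchmidt_iff_tsum_enorm_ne_top] at hA ⊢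
  rwa [tsum_enorm_star_apply_traceBasis_sq]

protected theorem add (hA : IsHilbertSchmidt A) (hB : IsHilbertSchmidt B) :
    IsHilbertSchmidt (A + B) :=
  isHilbertSchmidt_iff_memℓp.2 <|
    (isHilbertSchmidt_iff_memℓp.1 hA).add (isHilbertSchmidt_iff_memℓp.1 hB)

protected theorem sub (hA : IsHilbertSchmidt A) (hB : IsHilbertSchmidt B) :
    IsHilbertSchmidt (A - B) :=
  isHilbertSchmidt_iff_memℓp.2 <|
    (isHilbertSchmidt_iff_memℓp.1 hA).sub (isHilbertSchmidt_iff_memℓp.1 hB)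

theorem mul_left (L : H →L[ℂ] H) (hA : IsHilbertSchmidt A) : IsHilbertSchmidt (L * A) := by
  rw [isHilbertSchmidt_iff_summable] at hA ⊢
  exact .of_nonneg_of_le (fun i ↦ by positivity) (fun i ↦ norm_mul_apply_sq_le L A _)
    (hA.mul_left (‖L‖ ^ 2))

theorem mul_right (L : H →L[ℂ] H) (hA : IsHilbertSchmidt A) : IsHilbertSchmidt (A * L) := by
  simpa using (hA.star.mul_left (star L)).star

theorem hsNorm_mul_le_left (L : H →L[ℂ] H) (hA : IsHilbertSchmidt A) :
    hsNorm (L * A) ≤ ‖L‖ * hsNorm A := by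
  refine le_of_pow_le_pow_left₀ two_ne_zero (mul_nonneg (norm_nonneg _) (hsNorm_nonneg _)) ?_
  rw [mul_pow, hsNorm_sq, hsNorm_sq, ← tsum_mul_left]
  exact (isHilbertSchmidt_iff_summable.1 (hA.mul_left L)).tsum_le_tsum
    (fun i ↦ norm_mul_apply_sq_le L A _) ((isHilbertSchmidt_iff_summable.1 hA).mul_left _)

theorem hsNorm_mul_le_right (L : H →L[ℂ] H) (hA : IsHilbertSchmidt A) :
    hsNorm (A * L) ≤ hsNorm A * ‖L‖ := by
  rw [← hsNorm_star, star_mul, ← hsNorm_star A, ← norm_star L, mul_comm]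
  exact hA.star.hsNorm_mul_le_left (star L)

theorem opNorm_le_hsNorm (hA : IsHilbertSchmidt A) : ‖A‖ ≤ hsNorm A := by
  refine A.opNorm_le_bound (hsNorm_nonneg _) fun x ↦ ?_
  refine le_of_pow_le_pow_left₀ two_ne_zero (mul_nonneg (hsNorm_nonneg _) (norm_nonneg _)) ?_
  have hparseval := hasSum_norm_inner_sq_hilbertBasis (traceBasis H) (A x)
  rw [mul_pow, ← hsNorm_star A, hsNorm_sq, ← tsum_mul_right, ← hparseval.tsum_eq]
  refine hparseval.summable.tsum_le_tsum (fun i ↦ ?_)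
    ((isHilbertSchmidt_iff_summable.1 hA.star).mul_right _)
  rw [← mul_pow, ← A.adjoint_inner_left]
  exact pow_le_pow_left₀ (norm_nonneg _) (norm_inner_le_norm _ _) 2

/-- The family `(A eᵢ)ᵢ` of images of the trace basis under a Hilbert–Schmidt operator `A`, as a
vector of `ℓ²(H)`. It carries the Hilbert space structure of `ℓ²(H)` over to Hilbert–Schmidt
operators. -/
noncomputable def toLp (hA : IsHilbertSchmidt A) :
    lp (fun _ : (exists_hilbertBasis ℂ H).choose ↦ H) 2 :=
  ⟨fun i ↦ A (traceBasis H i), isHilbertSchmidt_iff_memℓp.1 hA⟩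

theorem norm_toLp (hA : IsHilbertSchmidt A) : ‖hA.toLp‖ = hsNorm A := by
  rw [← sq_eq_sq₀ (norm_nonneg _) (hsNorm_nonneg _), hsNorm_sq]
  simpa [toLp] using lp.norm_rpow_eq_tsum (p := 2) (by norm_num) hA.toLp

theorem hasSum_opDiag_star_mul (hA : IsHilbertSchmidt A) (hB : IsHilbertSchmidt B) :
    HasSum (opDiag (star A * B)) (⟪hA.toLp, hB.toLp⟫_ℂ).re := by
  rw [funext (opDiag_star_mul A B)]
  exact Complex.hasSum_re (lp.hasSum_inner hA.toLp hB.toLp)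

theorem opTrace_star_mul (hA : IsHilbertSchmidt A) (hB : IsHilbertSchmidt B) :
    opTrace (star A * B) = (⟪hA.toLp, hB.toLp⟫_ℂ).re :=
  (hA.hasSum_opDiag_star_mul hB).tsum_eq

theorem opTrace_star_mul_eq_polarization (hA : IsHilbertSchmidt A) (hB : IsHilbertSchmidt B) :
    opTrace (star A * B) =
      (hsNorm (A + B) * hsNorm (A + B) - hsNorm (A - B) * hsNorm (A - B)) / 4 := by
  rw [hA.opTrace_star_mul hB, ← (hA.add hB).norm_toLp, ← (hA.sub hB).norm_toLp]
  exact re_inner_eq_norm_add_mul_self_sub_norm_sub_mul_self_div_four (𝕜 := ℂ) hA.toLp hB.toLp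

-- Polarization reduces cyclicity to `hsNorm_star`, and so needs no double series.
theorem opTrace_mul_comm (hA : IsHilbertSchmidt A) (hB : IsHilbertSchmidt B) :
    opTrace (A * B) = opTrace (B * A) := by
  calc opTrace (A * B)
      = (hsNorm (star A + B) * hsNorm (star A + B)
          - hsNorm (star A - B) * hsNorm (star A - B)) / 4 := by
        rw [← hA.star.opTrace_star_mul_eq_polarization hB, star_star]
    _ = (hsNorm (A + star B) * hsNorm (A + star B)
          - hsNorm (A - star B) * hsNorm (A - star B)) / 4 := by
        rw [← hsNorm_star (star A + B), ← hsNorm_star (star A - B), star_add, star_sub, star_star]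
    _ = opTrace (star (B * A)) := by
        rw [← hA.opTrace_star_mul_eq_polarization hB.star, star_mul]
    _ = opTrace (B * A) := opTrace_star _

theorem abs_opTrace_mul_le (hA : IsHilbertSchmidt A) (hB : IsHilbertSchmidt B) :
    |opTrace (A * B)| ≤ hsNorm A * hsNorm B := by
  rw [← star_star A, hA.star.opTrace_star_mul hB, star_star, ← hsNorm_star A,
    ← hA.star.norm_toLp, ← hB.norm_toLp]
  exact (Complex.abs_re_le_norm _).trans (norm_inner_le_norm _ _)

end IsHilbertSchmidt

end HilbertSchmidt

section TraceClass

variable {H : Type*} [NormedAddCommGroup H] [InnerProductSpace ℂ H] [CompleteSpace H]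
  {A B L : H →L[ℂ] H}

/-- Trace-class operators, not necessarily positive, encoded as the products of two
Hilbert–Schmidt operators. -/
def IsTraceClass (A : H →L[ℂ] H) : Prop :=
  ∃ B C : H →L[ℂ] H, IsHilbertSchmidt B ∧ IsHilbertSchmidt C ∧ B * C = A

theorem IsHilbertSchmidt.isTraceClass_mul (hA : IsHilbertSchmidt A) (hB : IsHilbertSchmidt B) :
    IsTraceClass (A * B) :=
  ⟨A, B, hA, hB, rfl⟩

theorem IsPosTraceClass.isTraceClass (hA : IsPosTraceClass A) : IsTraceClass A := by
  have hsqrt : IsHilbertSchmidt (CFC.sqrt A) := by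
    rw [IsHilbertSchmidt, (IsSelfAdjoint.of_nonneg (CFC.sqrt_nonneg A)).star_eq,
      CFC.sqrt_mul_sqrt_self A hA.1]
    exact hA.2
  exact ⟨CFC.sqrt A, CFC.sqrt A, hsqrt, hsqrt, CFC.sqrt_mul_sqrt_self A hA.1⟩

namespace IsTraceClass

theorem isHilbertSchmidt (hA : IsTraceClass A) : IsHilbertSchmidt A := by
  obtain ⟨B, C, -, hC, rfl⟩ := hA
  exact hC.mul_left B

theorem mul_right (L : H →L[ℂ] H) (hA : IsTraceClass A) : IsTraceClass (A * L) := by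
  obtain ⟨B, C, hB, hC, rfl⟩ := hA
  exact ⟨B, C * L, hB, hC.mul_right L, (mul_assoc B C L).symm⟩

theorem summable_opDiag (hA : IsTraceClass A) : Summable (opDiag A) := by
  obtain ⟨B, C, hB, hC, rfl⟩ := hA
  simpa using (hB.star.hasSum_opDiag_star_mul hC).summable

end IsTraceClass

theorem opDiag_add (A B : H →L[ℂ] H) : opDiag (A + B) = opDiag A + opDiag B := by
  ext i
  simp [opDiag]

theorem opDiag_sub (A B : H →L[ℂ] H) : opDiag (A - B) = opDiag A - opDiag B := by
  ext i
  simp [opDiag]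

theorem summable_opDiag_add (hA : Summable (opDiag A)) (hB : Summable (opDiag B)) :
    Summable (opDiag (A + B)) := by
  rw [opDiag_add]
  exact hA.add hB

theorem summable_opDiag_sub (hA : Summable (opDiag A)) (hB : Summable (opDiag B)) :
    Summable (opDiag (A - B)) := by
  rw [opDiag_sub]
  exact hA.sub hB

theorem opTrace_add (hA : Summable (opDiag A)) (hB : Summable (opDiag B)) :
    opTrace (A + B) = opTrace A + opTrace B := by
  rw [opTrace, opDiag_add]
  exact hA.tsum_add hB

theorem opTrace_sub (hA : Summable (opDiag A)) (hB : Summable (opDiag B)) :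
    opTrace (A - B) = opTrace A - opTrace B := by
  rw [opTrace, opDiag_sub]
  exact hA.tsum_sub hB

theorem opTrace_add_commutator (hL : Summable (opDiag L)) (hA : IsHilbertSchmidt A)
    (hB : IsHilbertSchmidt B) : opTrace (L + (A * B - B * A)) = opTrace L := by
  have hAB := (hA.isTraceClass_mul hB).summable_opDiag
  have hBA := (hB.isTraceClass_mul hA).summable_opDiag
  rw [opTrace_add hL (summable_opDiag_sub hAB hBA), opTrace_sub hAB hBA, hA.opTrace_mul_comm hB,
    sub_self, add_zero]

end TraceClass

section Resolvent

variable {A : Type*} [Ring A] {x z h : A}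

theorem mul_inverse_one_add (hx : IsUnit (1 + x)) :
    x * Ring.inverse (1 + x) = 1 - Ring.inverse (1 + x) := by
  rw [eq_sub_iff_add_eq', ← one_add_mul, Ring.mul_inverse_cancel _ hx]

theorem inverse_one_add_mul (hx : IsUnit (1 + x)) :
    Ring.inverse (1 + x) * x = 1 - Ring.inverse (1 + x) := by
  rw [eq_sub_iff_add_eq', ← mul_one_add, Ring.inverse_mul_cancel _ hx]

theorem sq_mul_inverse_one_add (hx : IsUnit (1 + x)) :
    x ^ 2 * Ring.inverse (1 + x) = x - 1 + Ring.inverse (1 + x) := by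
  rw [sq, mul_assoc, mul_inverse_one_add hx, mul_sub, mul_inverse_one_add hx, mul_one]
  abel

/-- The operator `M x² (1 + x)⁻¹ + P (1 + x)⁻¹` whose trace is the energy `F(x)`. -/
noncomputable def energyOperator (M P x : A) : A :=
  M * x ^ 2 * Ring.inverse (1 + x) + P * Ring.inverse (1 + x)

/-- The gradient `M - (1 + z)⁻¹ M (1 + z)⁻¹ - (1 + z)⁻¹ P (1 + z)⁻¹` of the energy at `z`. -/
noncomputable def energyGradient (M P z : A) : A :=
  M - Ring.inverse (1 + z) * M * Ring.inverse (1 + z)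
    - Ring.inverse (1 + z) * P * Ring.inverse (1 + z)

theorem energyOperator_eq (M P : A) (hx : IsUnit (1 + x)) :
    energyOperator M P x = M * (x - 1) + (M + P) * Ring.inverse (1 + x) := by
  rw [energyOperator, mul_assoc, sq_mul_inverse_one_add hx]
  noncomm_ring

theorem energyGradient_eq (M P : A) (hz : IsUnit (1 + z)) :
    energyGradient M P z = Ring.inverse (1 + z) * z * M
      + Ring.inverse (1 + z) * M * (z * Ring.inverse (1 + z))
      - Ring.inverse (1 + z) * P * Ring.inverse (1 + z) := by
  rw [energyGradient, mul_inverse_one_add hz, inverse_one_add_mul hz]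
  noncomm_ring

theorem energyOperator_add_sub_sub_energyGradient_mul (M P : A) (hz : IsUnit (1 + z))
    (hzh : IsUnit (1 + (z + h))) :
    energyOperator M P (z + h) - energyOperator M P z - energyGradient M P z * h =
      (M + P) * Ring.inverse (1 + z) * h *
          (Ring.inverse (1 + z) * h * Ring.inverse (1 + (z + h)))
        + ((M + P) * Ring.inverse (1 + z) * h * (z * Ring.inverse (1 + z))
          - z * Ring.inverse (1 + z) * ((M + P) * Ring.inverse (1 + z) * h)) := by
  set R := Ring.inverse (1 + z)
  set S := Ring.inverse (1 + (z + h))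
  have resolvent_identity : R * h * S = R - S := by
    rw [Ring.inverse_sub_inverse (iff_of_true hz hzh), add_sub_add_left_eq_sub,
      add_sub_cancel_left]
  calc energyOperator M P (z + h) - energyOperator M P z - energyGradient M P z * h
      = R * (M + P) * R * h - (M + P) * (R - S) := by
        rw [energyOperator_eq M P hz, energyOperator_eq M P hzh, energyGradient]
        noncomm_ring
    _ = R * (M + P) * R * h - (M + P) * R * h * S := by
        rw [← resolvent_identity]
        noncomm_ring
    _ = (M + P) * R * h * (R * h * S)
          + ((M + P) * R * h * (z * R) - z * R * ((M + P) * R * h)) := by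
        rw [resolvent_identity, mul_inverse_one_add hz]
        noncomm_ring

end Resolvent

theorem eventually_isUnit_and_norm_inverse_le {A : Type*} [NormedRing A]
    [HasSummableGeomSeries A] {a : A} (ha : IsUnit a) :
    ∀ᶠ x in nhds a, IsUnit x ∧ ‖Ring.inverse x‖ ≤ ‖Ring.inverse a‖ + 1 := by
  obtain ⟨u, rfl⟩ := ha
  exact (Units.isOpen.eventually_mem u.isUnit).and <|
    (NormedRing.inverse_continuousAt u).norm.eventually_le_const (lt_add_one _)

theorem isUnit_one_add_of_nonneg {A : Type*} [CStarAlgebra A] [PartialOrder A]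
    [StarOrderedRing A] {a : A} (ha : 0 ≤ a) : IsUnit (1 + a) :=
  CStarAlgebra.isUnit_of_le 1 (le_add_of_nonneg_right ha)

section Energy

variable {H : Type*} [NormedAddCommGroup H] [InnerProductSpace ℂ H] [CompleteSpace H]
  {P z h : H →L[ℂ] H}

theorem isTraceClass_mul_sq_mul (M L : H →L[ℂ] H) (hz : IsHilbertSchmidt z) :
    IsTraceClass (M * z ^ 2 * L) := by
  simpa only [sq, mul_assoc] using (hz.mul_left M).isTraceClass_mul (hz.mul_right L)

theorem summable_opDiag_energyOperator (M : H →L[ℂ] H) (hP : IsTraceClass P)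
    (hz : IsHilbertSchmidt z) : Summable (opDiag (energyOperator M P z)) :=
  summable_opDiag_add (isTraceClass_mul_sq_mul M _ hz).summable_opDiag
    (hP.mul_right _).summable_opDiag

theorem opTrace_energyOperator (M : H →L[ℂ] H) (hP : IsTraceClass P) (hz : IsHilbertSchmidt z) :
    opTrace (energyOperator M P z) =
      opTrace (M * z ^ 2 * Ring.inverse (1 + z)) + opTrace (P * Ring.inverse (1 + z)) :=
  opTrace_add (isTraceClass_mul_sq_mul M _ hz).summable_opDiag (hP.mul_right _).summable_opDiag

-- Neither `M` nor `(1 + z)⁻¹ M (1 + z)⁻¹` need be Hilbert–Schmidt, only their difference is.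
theorem isHilbertSchmidt_energyGradient (M : H →L[ℂ] H) (hP : IsTraceClass P)
    (hz : IsHilbertSchmidt z) (hu : IsUnit (1 + z)) :
    IsHilbertSchmidt (energyGradient M P z) := by
  rw [energyGradient_eq M P hu]
  exact (((hz.mul_left _).mul_right M).add ((hz.mul_right _).mul_left _)).sub
    ((hP.isHilbertSchmidt.mul_left _).mul_right _)

theorem opTrace_energyOperator_add_sub_sub (M : H →L[ℂ] H) (hP : IsTraceClass P)
    (hz : IsHilbertSchmidt z) (hh : IsHilbertSchmidt h) (hu : IsUnit (1 + z))
    (hzh : IsUnit (1 + (z + h))) :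
    opTrace (energyOperator M P (z + h)) - opTrace (energyOperator M P z)
        - opTrace (energyGradient M P z * h) =
      opTrace ((M + P) * Ring.inverse (1 + z) * h *
        (Ring.inverse (1 + z) * h * Ring.inverse (1 + (z + h)))) := by
  set R := Ring.inverse (1 + z)
  set S := Ring.inverse (1 + (z + h))
  have hNRh : IsHilbertSchmidt ((M + P) * R * h) := hh.mul_left _
  have hzR : IsHilbertSchmidt (z * R) := hz.mul_right R
  have hRhS : IsHilbertSchmidt (R * h * S) := (hh.mul_left R).mul_right S
  have hgrad : IsTraceClass (energyGradient M P z * h) :=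
    (isHilbertSchmidt_energyGradient M hP hz hu).isTraceClass_mul hh
  have henergy := summable_opDiag_energyOperator M hP hz
  have henergy_add := summable_opDiag_energyOperator M hP (hz.add hh)
  rw [← opTrace_sub henergy_add henergy,
    ← opTrace_sub (summable_opDiag_sub henergy_add henergy) hgrad.summable_opDiag,
    energyOperator_add_sub_sub_energyGradient_mul M P hu hzh,
    opTrace_add_commutator (hNRh.isTraceClass_mul hRhS).summable_opDiag hNRh hzR]

theorem exists_abs_energy_remainder_le (M : H →L[ℂ] H) (hP : IsTraceClass P)
    (hz : IsHilbertSchmidt z) (hu : IsUnit (1 + z)) :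
    ∃ C > 0, ∃ δ > 0, ∀ h : H →L[ℂ] H, IsHilbertSchmidt h → hsNorm h < δ →
      |opTrace (energyOperator M P (z + h)) - opTrace (energyOperator M P z)
        - opTrace (energyGradient M P z * h)| ≤ C * hsNorm h ^ 2 := by
  set R := Ring.inverse (1 + z)
  obtain ⟨δ, hδ, hball⟩ := Metric.eventually_nhds_iff.1 (eventually_isUnit_and_norm_inverse_le hu)
  refine ⟨‖M + P‖ * ‖R‖ * (‖R‖ * (‖R‖ + 1)) + 1, by positivity, δ, hδ, fun h hh hhδ ↦ ?_⟩
  have hnear : dist (1 + (z + h)) (1 + z) < δ := by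
    simpa [dist_eq_norm] using hh.opNorm_le_hsNorm.trans_lt hhδ
  obtain ⟨hzh, hS⟩ := hball hnear
  have hRh := hh.mul_left R
  rw [opTrace_energyOperator_add_sub_sub M hP hz hh hu hzh]
  have hh₀ := hsNorm_nonneg h
  have hRh₀ := hsNorm_nonneg (R * h)
  set S := Ring.inverse (1 + (z + h))
  calc |opTrace ((M + P) * R * h * (R * h * S))|
      ≤ hsNorm ((M + P) * R * h) * hsNorm (R * h * S) :=
        (hh.mul_left _).abs_opTrace_mul_le (hRh.mul_right S)
    _ ≤ ‖(M + P) * R‖ * hsNorm h * (hsNorm (R * h) * ‖S‖) :=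
        mul_le_mul (hh.hsNorm_mul_le_left _) (hRh.hsNorm_mul_le_right S) (hsNorm_nonneg _)
          (by positivity)
    _ ≤ ‖M + P‖ * ‖R‖ * hsNorm h * (‖R‖ * hsNorm h * (‖R‖ + 1)) := by
        gcongr
        · exact norm_mul_le _ _
        · exact hh.hsNorm_mul_le_left R
    _ = ‖M + P‖ * ‖R‖ * (‖R‖ * (‖R‖ + 1)) * hsNorm h ^ 2 := by ring
    _ ≤ (‖M + P‖ * ‖R‖ * (‖R‖ * (‖R‖ + 1)) + 1) * hsNorm h ^ 2 := by
        gcongr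
        exact le_add_of_nonneg_right zero_le_one

end Energy

/-- As `opTrace` is the real part of the trace, this is differentiability of `Re F` when the
operators are not self-adjoint. -/
theorem trace_energy_frechet_differentiable_general {H : Type*} [NormedAddCommGroup H]
    [InnerProductSpace ℂ H] [CompleteSpace H] (M : H →L[ℂ] H) {P z : H →L[ℂ] H}
    (hP : IsTraceClass P) (hz : IsHilbertSchmidt z) (hu : IsUnit (1 + z)) :
    ∀ ε : ℝ, 0 < ε → ∃ δ : ℝ, 0 < δ ∧
      ∀ h : H →L[ℂ] H, IsHilbertSchmidt h → hsNorm h < δ →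
        |opTrace (M * (z + h) ^ 2 * Ring.inverse (1 + z + h))
            + opTrace (P * Ring.inverse (1 + z + h))
            - opTrace (M * z ^ 2 * Ring.inverse (1 + z))
            - opTrace (P * Ring.inverse (1 + z))
            - opTrace ((M - Ring.inverse (1 + z) * M * Ring.inverse (1 + z)
                - Ring.inverse (1 + z) * P * Ring.inverse (1 + z)) * h)|
          ≤ ε * hsNorm h := by
  intro ε hε
  obtain ⟨C, hC, δ, hδ, hbound⟩ := exists_abs_energy_remainder_le M hP hz hu
  refine ⟨min δ (ε / C), lt_min hδ (by positivity), fun h hh hsmall ↦ ?_⟩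
  obtain ⟨hhδ, hhε⟩ := lt_min_iff.1 hsmall
  calc _ = |opTrace (energyOperator M P (z + h)) - opTrace (energyOperator M P z)
          - opTrace (energyGradient M P z * h)| := by
        rw [opTrace_energyOperator M hP hz, opTrace_energyOperator M hP (hz.add hh),
          energyGradient, add_assoc 1 z h, sub_add_eq_sub_sub]
    _ ≤ C * hsNorm h * hsNorm h := by simpa only [sq, mul_assoc] using hbound h hh hhδ
    _ ≤ ε * hsNorm h := by
        gcongr
        · exact hsNorm_nonneg h
        · exact ((lt_div_iff₀' hC).1 hhε).le

/-- Fréchet differentiability (with respect to the Hilbert–Schmidt norm) of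
`F(z) = Tr[M z²(1+z)⁻¹] + Tr[P(1+z)⁻¹]` at every positive Hilbert–Schmidt `z`, with gradient
`M − (1+z)⁻¹M(1+z)⁻¹ − (1+z)⁻¹P(1+z)⁻¹`. -/
theorem trace_energy_frechet_differentiable {H : Type*} [NormedAddCommGroup H]
    [InnerProductSpace ℂ H] [CompleteSpace H] (M P z : H →L[ℂ] H) (hM : 0 ≤ M)
    (hP : IsPosTraceClass P) (hz : 0 ≤ z) (hzHS : IsHilbertSchmidt z) :
    ∀ ε : ℝ, 0 < ε → ∃ δ : ℝ, 0 < δ ∧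
      ∀ h : H →L[ℂ] H, IsSelfAdjoint h → IsHilbertSchmidt h → hsNorm h < δ →
        hsNorm h < 1 / 2 →
        |opTrace (M * (z + h) ^ 2 * Ring.inverse (1 + z + h))
            + opTrace (P * Ring.inverse (1 + z + h))
            - opTrace (M * z ^ 2 * Ring.inverse (1 + z))
            - opTrace (P * Ring.inverse (1 + z))
            - opTrace ((M - Ring.inverse (1 + z) * M * Ring.inverse (1 + z)
                - Ring.inverse (1 + z) * P * Ring.inverse (1 + z)) * h)|
          ≤ ε * hsNorm h := by
  intro ε hε
  obtain ⟨δ, hδ, hF⟩ := trace_energy_frechet_differentiable_general M hP.isTraceClass hzHS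
    (isUnit_one_add_of_nonneg hz) ε hε
  exact ⟨δ, hδ, fun h _ hh hhδ _ ↦ hF h hh hhδ⟩
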